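/- arXiv:2205.00877 — 2 statements merged into one kernel-verified Lean document; each statement's English description precedes it below -/
import Mathlib

section
/- (Theorem 3 of the paper: the Price of Anarchy of CMMI is unbounded.) For every real ε > 0 and every real B, there exist a CMMI instance together with penalty constants satisfying P_fwd > P_col > P_none > P_2 > P_1 > 2·|IK|·(T + max_{e∈ℰ} L_e), a feasible allocation a_ne that is a pure Nash equilibrium of the car-agent CMMI game of that instance, and an allocation a_so maximizing the social welfare J over all allocations, such that (|J(a_ne)| + ε) / (|J(a_so)| + ε) > B. -/
noncomputable section
open scoped Classical
open Finset

/-- An allocation: `a i k` is the slot (in `𝒯 ∪ {∅}`) of car `k` at intersection `i`. -/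
abbrev Alloc := ℕ → ℕ → Option ℕ

/-- A CMMI (coordinated management of multiple intersections) instance. -/
structure CMMI where
  /-- horizon: time slots are `{0, …, T}` -/
  T : ℕ
  /-- intersections -/
  I : Finset ℕ
  /-- directed edges -/
  E : Finset (ℕ × ℕ)
  hE : ∀ e ∈ E, e.1 ∈ I ∧ e.2 ∈ I
  /-- edge lengths -/
  L : ℕ × ℕ → ℕ
  hL : ∀ e ∈ E, 1 ≤ L e
  /-- cars -/
  K : Finset ℕ
  /-- route of each car -/
  route : ℕ → List ℕ
  hlen : ∀ k ∈ K, 2 ≤ (route k).length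
  hnodup : ∀ k ∈ K, (route k).Nodup
  hmem : ∀ k ∈ K, ∀ i ∈ route k, i ∈ I
  hedge : ∀ k ∈ K, ∀ p ∈ (route k).zip (route k).tail, p ∈ E
  /-- departure times -/
  Tdep : ℕ → ℕ
  hTdep : ∀ k ∈ K, Tdep k ≤ T
  /-- crossing sets at each intersection; a path at `i` is a pair
  (incoming predecessor — `none` for the special departure path, outgoing successor). -/
  X : ℕ → Set (Set (Option ℕ × ℕ))
  /-- convention: the special departure path lies in a common crossing set with
  every path having the same outgoing edge -/
  hX : ∀ i ∈ I, ∀ p : Option ℕ × ℕ, ∃ x ∈ X i, ((none : Option ℕ), p.2) ∈ x ∧ p ∈ x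
  /-- waiting-time bound -/
  TUB : ℕ
  /-- capacity bound -/
  KUB : ℕ

namespace CMMI
variable (M : CMMI)

/-- `r_k^-`: the route without its last intersection. -/
def rminus (k : ℕ) : List ℕ := (M.route k).dropLast

/-- the consecutive pairs of the route of `k` -/
def consec (k : ℕ) : List (ℕ × ℕ) := (M.route k).zip (M.route k).tail

/-- `γ(i,k)`: the predecessor of `i` on the route of `k` (if any). -/
def pred (k i : ℕ) : Option ℕ := ((M.consec k).find? (fun p => p.2 == i)).map Prod.fst

/-- the successor of `i` on the route of `k` (if any). -/
def succ (k i : ℕ) : Option ℕ := ((M.consec k).find? (fun p => p.1 == i)).map Prod.snd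

/-- the path `p_{i,k}` of car `k` at intersection `i` (determined by its route;
for the first intersection the incoming component is `none`, the special departure path). -/
def pathOf (k i : ℕ) : Option (Option ℕ × ℕ) := (M.succ k i).map (fun j => (M.pred k i, j))

/-- a valid allocation takes slots in `𝒯 ∪ {∅}` -/
def IsAlloc (a : Alloc) : Prop := ∀ i k t, a i k = some t → t ≤ M.T

/-- waiting time `w_{i,k}` (an integer) -/
def w (a : Alloc) (i k : ℕ) : ℤ :=
  match M.pred k i with
  | none => 0
  | some j =>
    match a i k, a j k with
    | some t, some s => (t : ℤ) - ((s : ℤ) + (M.L (j, i) : ℤ))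
    | _, _ => 0

/-- delay `D_k(a)` of car `k` -/
def Dk (a : Alloc) (k : ℕ) : ℤ := ((M.rminus k).map (fun i => M.w a i k)).sum

/-- total delay `D(a)` -/
def D (a : Alloc) : ℤ := ∑ k ∈ M.K, M.Dk a k

/-- (wb) holds at `(i,k)` -/
def WBok (a : Alloc) (i k : ℕ) : Prop := 0 ≤ M.w a i k ∧ M.w a i k ≤ (M.TUB : ℤ)

/-- number of cars `k` with `(i,k) ∈ IK` and `∅ ≠ a_{i,k} ≤ t` -/
def cnt (a : Alloc) (i t : ℕ) : ℕ :=
  (M.K.filter (fun k => i ∈ M.rminus k ∧ ∃ s, a i k = some s ∧ s ≤ t)).card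

/-- (lcap) holds at time `t` and edge `e` -/
def LCapOK (a : Alloc) (t : ℕ) (e : ℕ × ℕ) : Prop :=
  (M.cnt a e.1 t : ℤ) - (M.cnt a e.2 t : ℤ) ≤ (M.KUB : ℤ)

/-- (dep) is violated for car `k` -/
def DepViol (a : Alloc) (k : ℕ) : Prop :=
  ∃ i t, (M.route k).head? = some i ∧ a i k = some t ∧ t < M.Tdep k

/-- (arr) is violated for car `k` -/
def ArrViol (a : Alloc) (k : ℕ) : Prop :=
  ∃ iω l t, (M.route k).getLast? = some iω ∧ M.pred k iω = some l ∧ a l k = some t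
    ∧ M.T < t + M.L (l, iω)

/-- (col) is violated at intersection `i` -/
def ColViolAt (a : Alloc) (i : ℕ) : Prop :=
  ∃ k ∈ M.K, ∃ k' ∈ M.K, k ≠ k' ∧ i ∈ M.rminus k ∧ i ∈ M.rminus k'
    ∧ a i k = a i k' ∧ a i k ≠ none
    ∧ ∃ p p', M.pathOf k i = some p ∧ M.pathOf k' i = some p'
      ∧ ∃ x ∈ M.X i, p ∈ x ∧ p' ∈ x

/-- (fwd) is violated somewhere on the route of `k` -/
def FwdViolK (a : Alloc) (k : ℕ) : Prop :=
  ∃ i ∈ M.rminus k, ∃ j, M.pred k i = some j ∧ a i k ≠ none ∧ a j k = none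

/-- (alloc) is violated somewhere on the route of `k` -/
def NoneViolK (a : Alloc) (k : ℕ) : Prop := ∃ i ∈ M.rminus k, a i k = none

/-- (wb) is violated somewhere on the route of `k` -/
def WBviolK (a : Alloc) (k : ℕ) : Prop := ∃ i ∈ M.rminus k, ¬ M.WBok a i k

/-- feasibility of an allocation: (wb), (lcap), (dep), (arr), (col), (fwd), (alloc) -/
def Feasible (a : Alloc) : Prop :=
  (∀ k ∈ M.K, ∀ i ∈ M.rminus k, M.WBok a i k)
  ∧ (∀ e ∈ M.E, ∀ t ≤ M.T, M.LCapOK a t e)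
  ∧ (∀ k ∈ M.K, ¬ M.DepViol a k)
  ∧ (∀ k ∈ M.K, ¬ M.ArrViol a k)
  ∧ (∀ i ∈ M.I, ¬ M.ColViolAt a i)
  ∧ (∀ k ∈ M.K, ¬ M.FwdViolK a k)
  ∧ (∀ k ∈ M.K, ¬ M.NoneViolK a k)

/-- `|IK|`, the number of allocation variables -/
def nIK : ℕ := ∑ k ∈ M.K, (M.rminus k).length

/-- `max_{e ∈ ℰ} L_e` -/
def maxL : ℕ := M.E.sup M.L

end CMMI

/-- indicator `χ` -/
def chi (P : Prop) : ℝ := if P then 1 else 0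

/-- penalty constants -/
structure Pen where
  Pfwd : ℝ
  Pcol : ℝ
  Pnone : ℝ
  P2 : ℝ
  P1 : ℝ

/-- the ordering `P_fwd > P_col > P_none > P_2 > P_1 > 0` -/
def Pen.Order (P : Pen) : Prop :=
  P.Pcol < P.Pfwd ∧ P.Pnone < P.Pcol ∧ P.P2 < P.Pnone ∧ P.P1 < P.P2 ∧ 0 < P.P1

namespace CMMI
variable (M : CMMI)

/-- utility of car `k` in the car-agent CMMI game -/
def uCar (P : Pen) (a : Alloc) (k : ℕ) : ℝ :=
  -((M.Dk a k : ℝ)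
    + P.P1 * chi (M.WBviolK a k)
    + ∑ t ∈ Finset.range (M.T + 1),
        ((M.consec k).map (fun e => P.P1 * chi (¬ M.LCapOK a t e))).sum
    + P.P2 * chi (M.DepViol a k)
    + P.P1 * chi (M.ArrViol a k)
    + ((M.rminus k).map (fun i => P.Pcol * chi (M.ColViolAt a i))).sum
    + P.Pfwd * chi (M.FwdViolK a k)
    + P.Pnone * chi (M.NoneViolK a k))

/-- social welfare `J(a)` of the car-agent game -/
def J (P : Pen) (a : Alloc) : ℝ := ∑ k ∈ M.K, M.uCar P a k

/-- deviation of car `k` to the slot vector `b` on `r_k^-` -/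
def devCar (a : Alloc) (k : ℕ) (b : ℕ → Option ℕ) : Alloc :=
  fun i k' => if k' = k ∧ i ∈ M.rminus k then b i else a i k'

/-- pure Nash equilibrium of the car-agent game -/
def IsPNEcar (P : Pen) (a : Alloc) : Prop :=
  ∀ k ∈ M.K, ∀ b : ℕ → Option ℕ, (∀ i t, b i = some t → t ≤ M.T) →
    M.uCar P (M.devCar a k b) k ≤ M.uCar P a k

end CMMI


namespace CMMI

lemma chi_nonneg (p : Prop) : 0 ≤ chi p := by unfold chi; split_ifs <;> norm_num
lemma chi_true {p : Prop} (h : p) : chi p = 1 := by simp [chi, h]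
lemma chi_false {p : Prop} (h : ¬ p) : chi p = 0 := by simp [chi, h]

/-- The instance: car `0` has route `0,1,2`, cars `1..n+1` have route `1,0,2`. -/
def inst (n : ℕ) : CMMI where
  T := n + 4
  I := {0, 1, 2}
  E := {(0, 1), (1, 2), (1, 0), (0, 2)}
  hE := by decide
  L := fun e => if e = (1, 2) then 2 else 1
  hL := by intro e _; split_ifs <;> norm_num
  K := Finset.range (n + 2)
  route := fun k => if k = 0 then [0, 1, 2] else [1, 0, 2]
  hlen := by intro k _; split_ifs <;> simp
  hnodup := by intro k _; split_ifs <;> simp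
  hmem := by intro k _; split_ifs <;> simp
  hedge := by intro k _; split_ifs <;> simp
  Tdep := fun _ => 0
  hTdep := by intro k _; simp
  X := fun _ => {Set.univ}
  hX := by intro i _ p; simp
  TUB := n + 5
  KUB := n + 2

variable (n : ℕ)

lemma rm0 : (inst n).rminus 0 = [0, 1] := by simp [inst, rminus]
lemma rm1 {k : ℕ} (h : k ≠ 0) : (inst n).rminus k = [1, 0] := by simp [inst, rminus, h]
lemma co0 : (inst n).consec 0 = [(0, 1), (1, 2)] := by simp [inst, consec]
lemma co1 {k : ℕ} (h : k ≠ 0) : (inst n).consec k = [(1, 0), (0, 2)] := by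
  simp [inst, consec, h]
lemma mem0 (k : ℕ) : 0 ∈ (inst n).rminus k := by
  by_cases h : k = 0
  · subst h; simp [rm0]
  · simp [rm1 n h]
lemma mem1 (k : ℕ) : 1 ∈ (inst n).rminus k := by
  by_cases h : k = 0
  · subst h; simp [rm0]
  · simp [rm1 n h]
lemma mem_or {k i : ℕ} (h : i ∈ (inst n).rminus k) : i = 0 ∨ i = 1 := by
  by_cases hk : k = 0
  · subst hk; simpa [rm0] using h
  · rw [rm1 n hk] at h; simp at h; tauto
lemma p00 : (inst n).pred 0 0 = none := by simp [pred, co0]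
lemma p01 : (inst n).pred 0 1 = some 0 := by simp [pred, co0]
lemma p02 : (inst n).pred 0 2 = some 1 := by simp [pred, co0]
lemma p11 {k : ℕ} (h : k ≠ 0) : (inst n).pred k 1 = none := by simp [pred, co1 n h]
lemma p10 {k : ℕ} (h : k ≠ 0) : (inst n).pred k 0 = some 1 := by simp [pred, co1 n h]
lemma p12 {k : ℕ} (h : k ≠ 0) : (inst n).pred k 2 = some 0 := by simp [pred, co1 n h]
lemma path_ex (k i : ℕ) (h : i ∈ (inst n).rminus k) : ∃ p, (inst n).pathOf k i = some p := by
  by_cases hk : k = 0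
  · subst hk
    rcases mem_or n h with rfl | rfl <;> simp [pathOf, succ, co0]
  · rcases mem_or n h with rfl | rfl <;> simp [pathOf, succ, co1 n hk]

lemma L01 : (inst n).L (0, 1) = 1 := by simp [inst]
lemma L10 : (inst n).L (1, 0) = 1 := by simp [inst]
lemma L02 : (inst n).L (0, 2) = 1 := by simp [inst]
lemma L12 : (inst n).L (1, 2) = 2 := by simp [inst]

lemma Dk0 (a : Alloc) : (inst n).Dk a 0 = (inst n).w a 1 0 := by
  have : (inst n).w a 0 0 = 0 := by simp [w, p00]
  simp [Dk, rm0, this]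
lemma Dk1 (a : Alloc) {k : ℕ} (h : k ≠ 0) : (inst n).Dk a k = (inst n).w a 0 k := by
  have : (inst n).w a 1 k = 0 := by simp [w, p11 n h]
  simp [Dk, rm1 n h, this]

lemma lcap_ok (a : Alloc) (t : ℕ) (e : ℕ × ℕ) : (inst n).LCapOK a t e := by
  have h : (inst n).cnt a e.1 t ≤ n + 2 := by
    refine (Finset.card_filter_le _ _).trans ?_
    simp [inst]
  have h2 : (inst n).KUB = n + 2 := rfl
  unfold LCapOK
  rw [h2]
  omega

lemma col_iff (a : Alloc) (i : ℕ) : (inst n).ColViolAt a i ↔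
    ∃ k < n + 2, ∃ k' < n + 2, k ≠ k' ∧ i ∈ (inst n).rminus k ∧ i ∈ (inst n).rminus k' ∧
      a i k = a i k' ∧ a i k ≠ none := by
  constructor
  · rintro ⟨k, hk, k', hk', h1, h2, h3, h4, h5, -⟩
    exact ⟨k, Finset.mem_range.1 hk, k', Finset.mem_range.1 hk', h1, h2, h3, h4, h5⟩
  · rintro ⟨k, hk, k', hk', h1, h2, h3, h4, h5⟩
    obtain ⟨p, hp⟩ := path_ex n k i h2
    obtain ⟨p', hp'⟩ := path_ex n k' i h3
    exact ⟨k, Finset.mem_range.2 hk, k', Finset.mem_range.2 hk', h1, h2, h3, h4, h5,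
      p, p', hp, hp', Set.univ, rfl, trivial, trivial⟩

/-- Penalties. -/
def pen : Pen :=
  let c : ℝ := 2 * (inst n).nIK * ((inst n).T + (inst n).maxL) + 1 + (2 * n + 20)
  ⟨c + 4, c + 3, c + 2, c + 1, c⟩

lemma pen_base : (0 : ℝ) ≤ 2 * (inst n).nIK * ((inst n).T + (inst n).maxL) := by positivity
lemma P1_big : (2 * n + 20 : ℝ) < (pen n).P1 := by
  have := pen_base n
  simp only [pen]; linarith
lemma pen_order : (pen n).Order := by
  have := pen_base n
  refine ⟨?_, ?_, ?_, ?_, ?_⟩ <;> simp only [pen] <;> first | linarith | positivity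

lemma u_le (a : Alloc) (k : ℕ) :
    (inst n).uCar (pen n) a k ≤ -((inst n).Dk a k : ℝ)
      - (pen n).P1 * chi ((inst n).WBviolK a k ∨ (inst n).ArrViol a k ∨
        (inst n).ColViolAt a 0 ∨ (inst n).ColViolAt a 1 ∨ (inst n).NoneViolK a k) := by
  obtain ⟨o1, o2, o3, o4, o5⟩ := pen_order n
  have hs : ((((inst n).rminus k).map
      (fun i => (pen n).Pcol * chi ((inst n).ColViolAt a i))).sum) =
      (pen n).Pcol * chi ((inst n).ColViolAt a 0) + (pen n).Pcol * chi ((inst n).ColViolAt a 1) := by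
    by_cases h : k = 0
    · subst h; simp [rm0]
    · simp [rm1 n h]; ring
  have hl : ∑ t ∈ Finset.range ((inst n).T + 1),
        (((inst n).consec k).map
          (fun e => (pen n).P1 * chi (¬ (inst n).LCapOK a t e))).sum = 0 := by
    simp [lcap_ok, chi]
  unfold uCar
  rw [hs, hl]
  have g1 := mul_nonneg o5.le (chi_nonneg ((inst n).WBviolK a k))
  have g2 := mul_nonneg (o5.trans o4).le (chi_nonneg ((inst n).DepViol a k))
  have g3 := mul_nonneg o5.le (chi_nonneg ((inst n).ArrViol a k))
  have hc : 0 ≤ (pen n).Pcol := by linarith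
  have hf : 0 ≤ (pen n).Pfwd := by linarith
  have hn : 0 ≤ (pen n).Pnone := by linarith
  have g4 := mul_nonneg hc (chi_nonneg ((inst n).ColViolAt a 0))
  have g5 := mul_nonneg hc (chi_nonneg ((inst n).ColViolAt a 1))
  have g6 := mul_nonneg hf (chi_nonneg ((inst n).FwdViolK a k))
  have g7 := mul_nonneg hn (chi_nonneg ((inst n).NoneViolK a k))
  by_cases hv : (inst n).WBviolK a k ∨ (inst n).ArrViol a k ∨
        (inst n).ColViolAt a 0 ∨ (inst n).ColViolAt a 1 ∨ (inst n).NoneViolK a k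
  · rw [chi_true hv]
    rcases hv with h | h | h | h | h
    · rw [chi_true h] at *; linarith
    · rw [chi_true h] at *; linarith
    · rw [chi_true h] at *; linarith
    · rw [chi_true h] at *; linarith
    · rw [chi_true h] at *; linarith
  · rw [chi_false hv]; linarith

lemma w_lower (a : Alloc) (ha : (inst n).IsAlloc a) (i k : ℕ) (hi : i ∈ (inst n).rminus k) :
    -(n + 6 : ℤ) ≤ (inst n).w a i k := by
  have hT : (inst n).T = n + 4 := rfl
  unfold w
  split
  · omega
  · rename_i j hj
    have hL : (inst n).L (j, i) ≤ 2 := by simp only [inst]; split_ifs <;> norm_num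
    split
    · rename_i t s h1 h2
      have := ha _ _ _ h2
      omega
    · omega

lemma D_lower (a : Alloc) (ha : (inst n).IsAlloc a) (k : ℕ) :
    -(n + 6 : ℤ) ≤ (inst n).Dk a k := by
  by_cases h : k = 0
  · subst h; rw [Dk0]; exact w_lower n a ha _ _ (mem1 n 0)
  · rw [Dk1 n a h]; exact w_lower n a ha _ _ (mem0 n k)

lemma D_nonneg (a : Alloc) (k : ℕ) (h : ¬ (inst n).WBviolK a k) : 0 ≤ (inst n).Dk a k := by
  unfold WBviolK at h
  push Not at h
  by_cases hk : k = 0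
  · subst hk; rw [Dk0]; exact (h 1 (mem1 n 0)).1
  · rw [Dk1 n a hk]; exact (h 0 (mem0 n k)).1

lemma u_viol (a : Alloc) (ha : (inst n).IsAlloc a) (k : ℕ)
    (hv : (inst n).WBviolK a k ∨ (inst n).ArrViol a k ∨
        (inst n).ColViolAt a 0 ∨ (inst n).ColViolAt a 1 ∨ (inst n).NoneViolK a k) :
    (inst n).uCar (pen n) a k ≤ -n := by
  have h := u_le n a k
  rw [chi_true hv] at h
  have h1 : (-(n + 6 : ℤ) : ℝ) ≤ (inst n).Dk a k := by exact_mod_cast D_lower n a ha k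
  have h2 := P1_big n
  push_cast at h1
  linarith

lemma u_nonpos (a : Alloc) (ha : (inst n).IsAlloc a) (k : ℕ) :
    (inst n).uCar (pen n) a k ≤ 0 := by
  by_cases hv : (inst n).WBviolK a k
  · have := u_viol n a ha k (Or.inl hv)
    have : (0 : ℝ) ≤ n := by positivity
    linarith
  · have h := u_le n a k
    have h1 : (0 : ℝ) ≤ (inst n).Dk a k := by exact_mod_cast D_nonneg n a k hv
    have h2 := mul_nonneg (pen_order n).2.2.2.2.le (chi_nonneg ((inst n).WBviolK a k ∨
      (inst n).ArrViol a k ∨ (inst n).ColViolAt a 0 ∨ (inst n).ColViolAt a 1 ∨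
      (inst n).NoneViolK a k))
    linarith

lemma u_feas (a : Alloc) (h : (inst n).Feasible a) (k : ℕ) (hk : k ∈ (inst n).K) :
    (inst n).uCar (pen n) a k = -((inst n).Dk a k : ℝ) := by
  obtain ⟨h1, h2, h3, h4, h5, h6, h7⟩ := h
  have hw : ¬ (inst n).WBviolK a k := by
    rintro ⟨i, hi, hh⟩; exact hh (h1 k hk i hi)
  have c0 := h5 0 (by simp [inst])
  have c1 := h5 1 (by simp [inst])
  unfold uCar
  rw [chi_false hw, chi_false (h3 k hk), chi_false (h4 k hk), chi_false (h6 k hk),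
    chi_false (h7 k hk)]
  have hs : ((((inst n).rminus k).map
      (fun i => (pen n).Pcol * chi ((inst n).ColViolAt a i))).sum) = 0 := by
    by_cases h : k = 0
    · subst h; simp [rm0, chi_false c0, chi_false c1]
    · simp [rm1 n h, chi_false c0, chi_false c1]
  rw [hs]
  simp [lcap_ok, chi]

/-- Allocation: car `0` takes slots `s, t`; car `k` takes `k + d` and `k + d + 1`. -/
def al (s t d : ℕ) : Alloc := fun i k =>
  if n + 2 ≤ k then none else
  if k = 0 then (if i = 0 then some s else if i = 1 then some t else none)
  else (if i = 1 then some (k + d) else if i = 0 then some (k + d + 1) else none)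

lemma al_00 (s t d : ℕ) : al n s t d 0 0 = some s := by simp [al]
lemma al_10 (s t d : ℕ) : al n s t d 1 0 = some t := by simp [al]
lemma al_1 (s t d : ℕ) {k : ℕ} (h : k ≠ 0) (hk : k < n + 2) : al n s t d 1 k = some (k + d) := by
  simp [al, h, hk]
lemma al_0 (s t d : ℕ) {k : ℕ} (h : k ≠ 0) (hk : k < n + 2) :
    al n s t d 0 k = some (k + d + 1) := by
  simp [al, h, hk]

lemma al_isAlloc (s t d : ℕ) (hs : s ≤ n + 4) (ht : t ≤ n + 4) (hd : d ≤ 1) :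
    (inst n).IsAlloc (al n s t d) := by
  intro i k u h
  have hT : (inst n).T = n + 4 := rfl
  unfold al at h
  rw [hT]
  split_ifs at h <;> simp at h <;> omega

lemma w_al0 (s t d : ℕ) : (inst n).w (al n s t d) 1 0 = (t : ℤ) - (s + 1) := by
  simp [w, p01, al_00, al_10, L01]
lemma w_al1 (s t d : ℕ) {k : ℕ} (h : k ≠ 0) (hk : k < n + 2) :
    (inst n).w (al n s t d) 0 k = 0 := by
  simp [w, p10 n h, al_0 n s t d h hk, al_1 n s t d h hk, L10]

lemma al_ne_none (s t d : ℕ) {i k : ℕ} (hk : k < n + 2) (hi : i ∈ (inst n).rminus k) :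
    al n s t d i k ≠ none := by
  by_cases h : k = 0
  · subst h
    rcases mem_or n hi with rfl | rfl
    · simp [al_00]
    · simp [al_10]
  · rcases mem_or n hi with rfl | rfl
    · simp [al_0 n s t d h hk]
    · simp [al_1 n s t d h hk]

lemma al_feas (s t d : ℕ) (hst : s + 1 ≤ t) (ht : t ≤ n + 2) (hd : d ≤ 1)
    (c0 : s < d + 2) (c1 : t < d + 1 ∨ n + 1 + d < t) : (inst n).Feasible (al n s t d) := by
  have hT : (inst n).T = n + 4 := rfl
  have hU : (inst n).TUB = n + 5 := rfl
  refine ⟨?_, fun e _ t _ => lcap_ok n _ t e, ?_, ?_, ?_, ?_, ?_⟩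
  · intro k hk i hi
    have hk := Finset.mem_range.1 hk
    unfold WBok
    rw [hU]
    by_cases h : k = 0
    · subst h
      rcases mem_or n hi with rfl | rfl
      · simp [w, p00]; omega
      · rw [w_al0]; omega
    · rcases mem_or n hi with rfl | rfl
      · rw [w_al1 n s t d h hk]; omega
      · simp [w, p11 n h]; omega
  · rintro k hk ⟨i, u, -, -, h⟩
    exact absurd h (Nat.not_lt_zero _)
  · rintro k hk ⟨z, l, u, h1, h2, h3, h4⟩
    have hk := Finset.mem_range.1 hk
    by_cases h : k = 0
    · subst h
      have : z = 2 := by simpa [inst] using h1.symm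
      subst this
      rw [p02] at h2
      obtain rfl : 1 = l := by simpa using h2
      rw [al_10] at h3
      obtain rfl : t = u := by simpa using h3
      rw [L12, hT] at h4
      omega
    · have : z = 2 := by simpa [inst, h] using h1.symm
      subst this
      rw [p12 n h] at h2
      obtain rfl : 0 = l := by simpa using h2
      rw [al_0 n s t d h hk] at h3
      obtain rfl : k + d + 1 = u := by simpa using h3
      rw [L02, hT] at h4
      omega
  · intro i _ hc
    rw [col_iff] at hc
    obtain ⟨k, hk, k', hk', hne, hi, hi', he, -⟩ := hc
    rcases mem_or n hi with rfl | rfl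
    · by_cases h : k = 0
      · subst h
        have h' : k' ≠ 0 := fun h => hne h.symm
        rw [al_00, al_0 n s t d h' hk'] at he
        simp at he; omega
      · by_cases h' : k' = 0
        · subst h'
          rw [al_00, al_0 n s t d h hk] at he
          simp at he; omega
        · rw [al_0 n s t d h hk, al_0 n s t d h' hk'] at he
          simp at he; omega
    · by_cases h : k = 0
      · subst h
        have h' : k' ≠ 0 := fun h => hne h.symm
        rw [al_10, al_1 n s t d h' hk'] at he
        simp at he; omega
      · by_cases h' : k' = 0
        · subst h'
          rw [al_10, al_1 n s t d h hk] at he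
          simp at he; omega
        · rw [al_1 n s t d h hk, al_1 n s t d h' hk'] at he
          simp at he; omega
  · rintro k hk ⟨i, hi, j, hj, -, h⟩
    have hk' := Finset.mem_range.1 hk
    refine al_ne_none n s t d hk' (i := j) ?_ h
    by_cases h0 : k = 0
    · subst h0
      rcases mem_or n hi with rfl | rfl
      · simp [p00] at hj
      · rw [p01] at hj; simp at hj; subst hj; exact mem0 n _
    · rcases mem_or n hi with rfl | rfl
      · rw [p10 n h0] at hj; simp at hj; subst hj; exact mem1 n _
      · simp [p11 n h0] at hj
  · rintro k hk ⟨i, hi, h⟩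
    exact al_ne_none n s t d (Finset.mem_range.1 hk) hi h

lemma u_al1 (s t d : ℕ) (hf : (inst n).Feasible (al n s t d)) {k : ℕ} (h : k ≠ 0)
    (hk : k ∈ (inst n).K) : (inst n).uCar (pen n) (al n s t d) k = 0 := by
  rw [u_feas n _ hf k hk, Dk1 n _ h, w_al1 n s t d h (Finset.mem_range.1 hk)]
  simp

lemma zero_mem_K : 0 ∈ (inst n).K := Finset.mem_range.2 (by omega)

lemma u_al0 (s t d : ℕ) (hf : (inst n).Feasible (al n s t d)) :
    (inst n).uCar (pen n) (al n s t d) 0 = -((t : ℝ) - (s + 1)) := by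
  rw [u_feas n _ hf 0 (zero_mem_K n), Dk0, w_al0]
  push_cast
  ring

lemma J_al (s t d : ℕ) (hf : (inst n).Feasible (al n s t d)) :
    (inst n).J (pen n) (al n s t d) = -((t : ℝ) - (s + 1)) := by
  unfold J
  rw [Finset.sum_eq_single 0 (fun k hk h => u_al1 n s t d hf h hk)
    (fun h => absurd (zero_mem_K n) h), u_al0 n s t d hf]

lemma ne_feas : (inst n).Feasible (al n 1 (n + 2) 0) :=
  al_feas n 1 (n + 2) 0 (by omega) (by omega) (by omega) (by omega) (by omega)

lemma dev_alloc (a : Alloc) (ha : (inst n).IsAlloc a) (k : ℕ) (b : ℕ → Option ℕ)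
    (hb : ∀ i t, b i = some t → t ≤ (inst n).T) : (inst n).IsAlloc ((inst n).devCar a k b) := by
  intro i k' t h
  unfold devCar at h
  split_ifs at h
  · exact hb _ _ h
  · exact ha _ _ _ h

lemma ne_pne : (inst n).IsPNEcar (pen n) (al n 1 (n + 2) 0) := by
  intro k hk b hb
  have hall := dev_alloc n _ (al_isAlloc n 1 (n + 2) 0 (by omega) (by omega) (by omega)) k b hb
  by_cases h : k = 0
  swap
  · rw [u_al1 n _ _ _ (ne_feas n) h hk]
    exact u_nonpos n _ hall k
  subst h
  have hu : (inst n).uCar (pen n) (al n 1 (n + 2) 0) 0 = -(n : ℝ) := by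
    rw [u_al0 n _ _ _ (ne_feas n)]; push_cast; ring
  rw [hu]
  set a' := (inst n).devCar (al n 1 (n + 2) 0) 0 b with ha'
  by_cases hv : (inst n).WBviolK a' 0 ∨ (inst n).ArrViol a' 0 ∨
        (inst n).ColViolAt a' 0 ∨ (inst n).ColViolAt a' 1 ∨ (inst n).NoneViolK a' 0
  · exact u_viol n a' hall 0 hv
  have hle := u_le n a' 0
  rw [chi_false hv] at hle
  push Not at hv
  obtain ⟨hw, harr, hc0, hc1, hnn⟩ := hv
  have e0 : a' 0 0 = b 0 := by simp [ha', devCar, mem0]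
  have e1 : a' 1 0 = b 1 := by simp [ha', devCar, mem1]
  have f0 : ∀ k, k ≠ 0 → k < n + 2 → a' 0 k = some (k + 1) := by
    intro k h hk
    have := al_0 n 1 (n + 2) 0 h hk
    simpa [ha', devCar, h] using this
  have f1 : ∀ k, k ≠ 0 → k < n + 2 → a' 1 k = some k := by
    intro k h hk
    have := al_1 n 1 (n + 2) 0 h hk
    simpa [ha', devCar, h] using this
  obtain ⟨s, hs⟩ : ∃ s, a' 0 0 = some s := by
    by_contra hh
    exact hnn ⟨0, mem0 n 0, Option.eq_none_iff_forall_ne_some.2 (fun x hx => hh ⟨x, hx⟩)⟩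
  obtain ⟨t, ht⟩ : ∃ t, a' 1 0 = some t := by
    by_contra hh
    exact hnn ⟨1, mem1 n 0, Option.eq_none_iff_forall_ne_some.2 (fun x hx => hh ⟨x, hx⟩)⟩
  have hwv : (inst n).w a' 1 0 = (t : ℤ) - (s + 1) := by simp [w, p01, hs, ht, L01]
  have hD := D_nonneg n a' 0 hw
  rw [Dk0, hwv] at hD
  have hT : (inst n).T = n + 4 := rfl
  have htle : t ≤ n + 2 := by
    by_contra hh
    exact harr ⟨2, 1, t, by simp [inst], p02 n, ht, by rw [L12, hT]; omega⟩
  have ht2 : t = n + 2 := by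
    by_contra hh
    refine hc1 ((col_iff n a' 1).2 ⟨0, by omega, t, by omega, by omega, mem1 n _, mem1 n _, ?_, ?_⟩)
    · rw [ht, f1 t (by omega) (by omega)]
    · simp [ht]
  have hs2 : s ≤ 1 := by
    by_contra hh
    refine hc0 ((col_iff n a' 0).2
      ⟨0, by omega, s - 1, by omega, by omega, mem0 n _, mem0 n _, ?_, ?_⟩)
    · rw [hs, f0 (s - 1) (by omega) (by omega)]
      congr 1; omega
    · simp [hs]
  rw [Dk0, hwv] at hle
  subst ht2
  push_cast at hle
  have : (s : ℝ) ≤ 1 := by exact_mod_cast hs2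
  linarith

end CMMI

/-- Theorem 3: the Price of Anarchy of CMMI is unbounded. For every `ε > 0` and every `B`
there are a CMMI instance, penalty constants with
`P_fwd > P_col > P_none > P_2 > P_1 > 2·|IK|·(T + max_e L_e)`, a feasible pure Nash
equilibrium `a_ne` of the car-agent game, and an allocation `a_so` maximizing the social
welfare `J` over all allocations, with `(|J(a_ne)| + ε) / (|J(a_so)| + ε) > B`. -/
theorem cmmi_poa_unbounded (ε B : ℝ) (hε : 0 < ε) :
    ∃ (M : CMMI) (P : Pen), P.Order
      ∧ (2 * M.nIK * (M.T + M.maxL) : ℝ) < P.P1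
      ∧ ∃ ane : Alloc, M.IsAlloc ane ∧ M.Feasible ane ∧ M.IsPNEcar P ane
      ∧ ∃ aso : Alloc, M.IsAlloc aso
        ∧ (∀ a : Alloc, M.IsAlloc a → M.J P a ≤ M.J P aso)
        ∧ B < (|M.J P ane| + ε) / (|M.J P aso| + ε) := by
  obtain ⟨n, hn⟩ := exists_nat_gt (B * ε)
  have hso : (CMMI.inst n).Feasible (CMMI.al n 0 1 1) :=
    CMMI.al_feas n 0 1 1 (by omega) (by omega) (by omega) (by omega) (by omega)
  have hJso : (CMMI.inst n).J (CMMI.pen n) (CMMI.al n 0 1 1) = 0 := by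
    rw [CMMI.J_al n _ _ _ hso]; norm_num
  have hJne : (CMMI.inst n).J (CMMI.pen n) (CMMI.al n 1 (n + 2) 0) = -(n : ℝ) := by
    rw [CMMI.J_al n _ _ _ (CMMI.ne_feas n)]; push_cast; ring
  refine ⟨CMMI.inst n, CMMI.pen n, CMMI.pen_order n, ?_, CMMI.al n 1 (n + 2) 0,
    CMMI.al_isAlloc n _ _ _ (by omega) (by omega) (by omega), CMMI.ne_feas n, CMMI.ne_pne n,
    CMMI.al n 0 1 1, CMMI.al_isAlloc n _ _ _ (by omega) (by omega) (by omega), ?_, ?_⟩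
  · simp only [CMMI.pen]
    have : (0 : ℝ) ≤ n := by positivity
    linarith
  · intro a ha
    rw [hJso]
    exact Finset.sum_nonpos (fun k _ => CMMI.u_nonpos n a ha k)
  · rw [hJso, hJne, abs_neg, abs_zero, zero_add, lt_div_iff₀ hε, Nat.abs_cast]
    linarith
end
end

section
/- (Feasibility under non-binding bounds; this is the core of the proofs of Lemma 2 and Theorem 2, where agents processed one at a time can always take the earliest collision-free slot at each successive intersection of their route.) Let a CMMI instance be given, let K = |𝒦|, let m = max_{k∈𝒦} |r_k^-|, and suppose: K_UB ≥ K; T_UB ≥ K − 1; and T ≥ max_{k∈𝒦} ( T_k^o + Σ_{(i,j) a consecutive pair of r_k} L_{(i,j)} ) + m·(K − 1). Then the set of feasible allocations is nonempty; moreover there exists a feasible allocation a in which 0 ≤ w_{i,k} ≤ K − 1 for every (i,k) ∈ IK. -/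
noncomputable section
open scoped Classical
open Finset

/-- the earliest slot `≥ n` congruent to `c` modulo `K` -/
def nxtSlot (K c n : ℕ) : ℕ := n + (c + (K - 1) * n) % K

lemma nxtSlot_ge (K c n : ℕ) : n ≤ nxtSlot K c n := Nat.le_add_right _ _

lemma nxtSlot_le {K : ℕ} (hK : 0 < K) (c n : ℕ) : nxtSlot K c n ≤ n + (K - 1) := by
  have := Nat.mod_lt (c + (K - 1) * n) hK
  unfold nxtSlot
  omega

lemma nxtSlot_mod {K c : ℕ} (hc : c < K) (n : ℕ) : nxtSlot K c n % K = c := by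
  unfold nxtSlot
  obtain ⟨m, rfl⟩ : ∃ m, K = m + 1 := ⟨K - 1, by omega⟩
  rw [Nat.add_mod_mod]
  have : n + (c + (m + 1 - 1) * n) = c + (m + 1) * n := by
    simp only [Nat.add_sub_cancel]; ring
  rw [this, Nat.add_mul_mod_self_left, Nat.mod_eq_of_lt hc]

/-- slot at the `p`-th intersection, given the edge lengths `l` along the route -/
def posSlot (K c d : ℕ) (l : List ℕ) : ℕ → ℕ
  | 0 => nxtSlot K c d
  | p + 1 => nxtSlot K c (posSlot K c d l p + l.getD p 0)

lemma posSlot_mod {K c : ℕ} (hc : c < K) (d : ℕ) (l : List ℕ) (p : ℕ) :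
    posSlot K c d l p % K = c := by
  cases p <;> exact nxtSlot_mod hc _

lemma take_succ_sum (l : List ℕ) (p : ℕ) :
    (l.take (p + 1)).sum = (l.take p).sum + l.getD p 0 := by
  rw [List.take_add_one, List.sum_append, List.getD_eq_getElem?_getD]
  cases l[p]? <;> simp

lemma take_sum_le (l : List ℕ) (p : ℕ) : (l.take p).sum ≤ l.sum := by
  conv_rhs => rw [← List.take_append_drop p l, List.sum_append]
  exact Nat.le_add_right _ _

lemma posSlot_le {K : ℕ} (hK : 0 < K) (c d : ℕ) (l : List ℕ) (p : ℕ) :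
    posSlot K c d l p ≤ d + (l.take p).sum + (p + 1) * (K - 1) := by
  induction p with
  | zero => simpa [posSlot] using nxtSlot_le hK c d
  | succ p ih =>
    have h := nxtSlot_le hK c (posSlot K c d l p + l.getD p 0)
    rw [take_succ_sum]
    have e : (p + 1 + 1) * (K - 1) = (p + 1) * (K - 1) + (K - 1) := by ring
    simp only [posSlot]
    omega

lemma pred_spec (M : CMMI) {k i j : ℕ} (hk : k ∈ M.K) (h : M.pred k i = some j) :
    ∃ p, p + 1 < (M.route k).length ∧ (M.route k).idxOf j = p ∧ (M.route k).idxOf i = p + 1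
      ∧ j ∈ M.rminus k ∧ ((M.consec k).map M.L).getD p 0 = M.L (j, i) := by
  have hn := M.hnodup k hk
  unfold CMMI.pred at h
  rw [Option.map_eq_some_iff] at h
  obtain ⟨⟨x, y⟩, hf, rfl⟩ := h
  have hy := List.find?_some hf
  have hm := List.mem_of_find?_eq_some hf
  simp only [beq_iff_eq] at hy
  subst hy
  obtain ⟨p, hp, hpe⟩ := List.mem_iff_getElem.1 hm
  have hp' : p < (M.route k).length - 1 := by
    simp [CMMI.consec] at hp; omega
  have hget : (M.consec k)[p]? = some (x, y) := by rw [List.getElem?_eq_getElem hp, hpe]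
  simp only [CMMI.consec, List.getElem_zip, List.getElem_tail, Prod.mk.injEq] at hpe
  obtain ⟨h1, h2⟩ := hpe
  refine ⟨p, by omega, ?_, ?_, ?_, ?_⟩
  · rw [← h1]; exact hn.idxOf_getElem _ _
  · rw [← h2]; exact hn.idxOf_getElem _ _
  · rw [CMMI.rminus, List.mem_iff_getElem]
    exact ⟨p, by simpa using hp', by rw [List.getElem_dropLast]; exact h1⟩
  · rw [List.getD_eq_getElem?_getD, List.getElem?_map, hget]; rfl

lemma idxOf_rminus (M : CMMI) {k i : ℕ} (hk : k ∈ M.K) (h : i ∈ M.rminus k) :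
    (M.route k).idxOf i < (M.rminus k).length := by
  obtain ⟨p, hp, rfl⟩ := List.mem_iff_getElem.1 h
  have : (M.route k).idxOf ((M.rminus k)[p]) = p := by
    simp only [CMMI.rminus, List.getElem_dropLast]
    exact (M.hnodup k hk).idxOf_getElem _ _
  omega

/-- Feasibility under non-binding bounds: with `K = |𝒦|`, `m = max_k |r_k^-|`, if
`K_UB ≥ K`, `T_UB ≥ K − 1` and
`T ≥ max_k (T_k^o + Σ_{(i,j) consecutive on r_k} L_{(i,j)}) + m·(K − 1)`, then a feasible
allocation exists; moreover one with `0 ≤ w_{i,k} ≤ K − 1` for every `(i,k) ∈ IK`. -/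
theorem cmmi_feasible_of_nonbinding_bounds (M : CMMI)
    (hKUB : (M.K.card : ℤ) ≤ (M.KUB : ℤ))
    (hTUB : (M.K.card : ℤ) - 1 ≤ (M.TUB : ℤ))
    (hT : ((M.K.sup (fun k => M.Tdep k + ((M.consec k).map M.L).sum) : ℕ) : ℤ)
        + ((M.K.sup (fun k => (M.rminus k).length) : ℕ) : ℤ) * ((M.K.card : ℤ) - 1)
        ≤ (M.T : ℤ)) :
    ∃ a : Alloc, M.IsAlloc a ∧ M.Feasible a
      ∧ ∀ k ∈ M.K, ∀ i ∈ M.rminus k, 0 ≤ M.w a i k ∧ M.w a i k ≤ (M.K.card : ℤ) - 1 := by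
  obtain ⟨c, hc, hinj⟩ : ∃ c : ℕ → ℕ, (∀ k ∈ M.K, c k < M.K.card) ∧
      ∀ k ∈ M.K, ∀ k' ∈ M.K, c k = c k' → k = k' := by
    refine ⟨fun k => if h : k ∈ M.K then (M.K.equivFin ⟨k, h⟩ : ℕ) else 0, ?_, ?_⟩
    · intro k hk
      simp only [hk, dif_pos]
      exact Fin.is_lt _
    · intro k hk k' hk' h
      simp only [hk, hk', dif_pos] at h
      have := M.K.equivFin.injective (Fin.ext h)
      simpa using this
  set s : ℕ → ℕ → ℕ := fun k p =>
    posSlot M.K.card (c k) (M.Tdep k) ((M.consec k).map M.L) p with hs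
  set a : Alloc := fun i k =>
    if k ∈ M.K ∧ i ∈ M.rminus k then some (s k ((M.route k).idxOf i)) else none with ha
  have hpos : ∀ k ∈ M.K, 0 < M.K.card := fun k hk => Finset.card_pos.2 ⟨k, hk⟩
  have haeq : ∀ k ∈ M.K, ∀ i ∈ M.rminus k, a i k = some (s k ((M.route k).idxOf i)) := by
    intro k hk i hi
    simp [ha, hk, hi]
  have hainv : ∀ i k t, a i k = some t → k ∈ M.K ∧ i ∈ M.rminus k ∧
      t = s k ((M.route k).idxOf i) := by
    intro i k t h
    simp only [ha] at h
    split_ifs at h with h'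
    exact ⟨h'.1, h'.2, (Option.some.inj h).symm⟩
  have hbound : ∀ k ∈ M.K, ∀ p, p < (M.rminus k).length →
      s k p + ((M.consec k).map M.L).getD p 0 ≤ M.T := by
    intro k hk p hp
    have h1 := posSlot_le (hpos k hk) (c k) (M.Tdep k) ((M.consec k).map M.L) p
    have h2 := take_sum_le ((M.consec k).map M.L) (p + 1)
    rw [take_succ_sum] at h2
    have h3 := Finset.le_sup (f := fun k => M.Tdep k + ((M.consec k).map M.L).sum) hk
    have h4 := Finset.le_sup (f := fun k => (M.rminus k).length) hk
    have h5 := Nat.mul_le_mul_right (M.K.card - 1)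
      (show p + 1 ≤ M.K.sup (fun k => (M.rminus k).length) from le_trans hp h4)
    have h6 : M.K.sup (fun k => M.Tdep k + ((M.consec k).map M.L).sum)
        + M.K.sup (fun k => (M.rminus k).length) * (M.K.card - 1) ≤ M.T := by
      zify [Nat.succ_le_of_lt (hpos k hk)]
      exact_mod_cast hT
    simp only [hs] at *
    omega
  have hw : ∀ k ∈ M.K, ∀ i ∈ M.rminus k,
      0 ≤ M.w a i k ∧ M.w a i k ≤ (M.K.card : ℤ) - 1 := by
    intro k hk i hi
    have hK := hpos k hk
    unfold CMMI.w
    cases hp : M.pred k i with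
    | none => simp only; omega
    | some j =>
      obtain ⟨p, -, hj, hi', hjm, hl⟩ := pred_spec M hk hp
      simp only [haeq k hk i hi, haeq k hk j hjm, hj, hi']
      have h1 := nxtSlot_ge M.K.card (c k) (s k p + M.L (j, i))
      have h2 := nxtSlot_le hK (c k) (s k p + M.L (j, i))
      have h3 : s k (p + 1) = nxtSlot M.K.card (c k) (s k p + M.L (j, i)) := by
        rw [← hl]; rfl
      rw [← h3] at h1 h2
      omega
  refine ⟨a, ?_, ⟨?_, ?_, ?_, ?_, ?_, ?_, ?_⟩, hw⟩
  · intro i k t h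
    obtain ⟨hk, hi, rfl⟩ := hainv i k t h
    have := hbound k hk _ (idxOf_rminus M hk hi)
    omega
  · intro k hk i hi
    exact ⟨(hw k hk i hi).1, (hw k hk i hi).2.trans hTUB⟩
  · intro e _ t _
    have : M.cnt a e.1 t ≤ M.K.card := Finset.card_filter_le _ _
    unfold CMMI.LCapOK
    omega
  · rintro k hk ⟨i, t, hh, hat, hlt⟩
    obtain ⟨-, -, rfl⟩ := hainv i k t hat
    have h0 : (M.route k).idxOf i = 0 := by
      cases hr : M.route k with
      | nil => simp [hr] at hh
      | cons x xs =>
        simp only [hr, List.head?_cons, Option.some.injEq] at hh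
        simp [hh]
    rw [h0] at hlt
    have := nxtSlot_ge M.K.card (c k) (M.Tdep k)
    simp only [hs, posSlot] at hlt
    omega
  · rintro k hk ⟨iω, l, t, -, hp, hat, hlt⟩
    obtain ⟨-, hl, rfl⟩ := hainv l k t hat
    obtain ⟨p, -, hj, -, -, hL⟩ := pred_spec M hk hp
    have hb := hbound k hk _ (idxOf_rminus M hk hl)
    rw [hj, hL] at hb
    rw [hj] at hlt
    omega
  · rintro i _ ⟨k, hk, k', hk', hne, hi, hi', he, -, -⟩
    rw [haeq k hk i hi, haeq k' hk' i hi'] at he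
    have he' := congrArg (· % M.K.card) (Option.some.inj he)
    simp only [hs, posSlot_mod (hc k hk), posSlot_mod (hc k' hk')] at he'
    exact hne (hinj k hk k' hk' he')
  · rintro k hk ⟨i, _, j, hp, -, hn⟩
    obtain ⟨p, -, -, -, hjm, -⟩ := pred_spec M hk hp
    rw [haeq k hk j hjm] at hn
    cases hn
  · rintro k hk ⟨i, hi, hn⟩
    rw [haeq k hk i hi] at hn
    cases hn
end
end
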